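/- Let g be a positive integer, let (G,σ) be a connected g-wide signed graph, and let x,y be vertices of (G,σ) lying on a common negative cycle of length g with ad_{(G,σ)}(x,y) = p > 0. Then ad_{EDC(G,σ)}(x⁺,y⁺) = ad_{EDC(G,σ)}(x⁻,y⁻) = p. Moreover, if d_G(x,y) = ⌊g/2⌋, then ad_{EDC(G,σ)}(x⁺,y⁻) = ad_{EDC(G,σ)}(x⁻,y⁺) = g − p = ⌈g/2⌉; otherwise ad_{EDC(G,σ)}(x⁺,y⁻) = ad_{EDC(G,σ)}(x⁻,y⁺) = −p − 1. -/

import Mathlib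

open SimpleGraph

namespace SignedPaper

variable {V : Type*} {W : Type*}

/-- The product of the signs (values of `σ`) along the darts of a walk. -/
def walkSign {G : SimpleGraph V} (σ : V → V → ℤ) {a b : V} (w : G.Walk a b) : ℤ :=
  (w.darts.map fun d => σ d.toProd.1 d.toProd.2).prod

/-- The length of a walk in a weighted signed graph: the sum of the absolute
values of the weights of its edges, with multiplicity. -/
def walkWLen {G : SimpleGraph V} (ω : V → V → ℤ) {a b : V} (w : G.Walk a b) : ℕ :=
  (w.darts.map fun d => (ω d.toProd.1 d.toProd.2).natAbs).sum

/-- Walk-girth of type `ij` of a signed graph: the length of a shortest closed walk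
which is negative iff `neg` and of odd length iff `odd` (`⊤` if none exists). -/
noncomputable def sGirth (G : SimpleGraph V) (σ : V → V → ℤ) (neg odd : Bool) : ℕ∞ :=
  sInf {n : ℕ∞ | ∃ (a : V) (w : G.Walk a a), (w.length : ℕ∞) = n ∧
    (walkSign σ w < 0 ↔ neg = true) ∧ (Odd w.length ↔ odd = true)}

/-- Walk-girth of type `ij` of a weighted signed graph. -/
noncomputable def wGirth (G : SimpleGraph V) (ω : V → V → ℤ) (neg odd : Bool) : ℕ∞ :=
  sInf {n : ℕ∞ | ∃ (a : V) (w : G.Walk a a), (walkWLen ω w : ℕ∞) = n ∧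
    (walkSign ω w < 0 ↔ neg = true) ∧ (Odd (walkWLen ω w) ↔ odd = true)}

/-- A graph homomorphism is a homomorphism of signed graphs if it preserves
the signs of all closed walks. -/
def IsSignedHom {G : SimpleGraph V} {H : SimpleGraph W} (σ : V → V → ℤ) (π : W → W → ℤ)
    (f : G →g H) : Prop :=
  ∀ (a : V) (w : G.Walk a a), walkSign π (w.map f) = walkSign σ w

/-- A signed graph is `g`-wide if it has no positive closed walk of odd length, and
every negative closed walk has length at least `g` and of the same parity as `g`. -/
def gWide (G : SimpleGraph V) (σ : V → V → ℤ) (g : ℕ) : Prop :=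
  (∀ (a : V) (w : G.Walk a a), 0 < walkSign σ w → ¬ Odd w.length) ∧
  (∀ (a : V) (w : G.Walk a a), walkSign σ w < 0 → g ≤ w.length ∧ (Odd w.length ↔ Odd g))

open Classical in
/-- The algebraic distance between two vertices of a signed graph. -/
noncomputable def adist (G : SimpleGraph V) (σ : V → V → ℤ) (u v : V) : ℤ :=
  if ∃ w : G.Walk u v, w.IsPath ∧ w.length = G.dist u v ∧ 0 < walkSign σ w
  then (G.dist u v : ℤ) else -(G.dist u v : ℤ)

/-- The underlying graph of the Extended Double Cover of a signed graph:
`(v, true)` plays the role of `v⁺` and `(v, false)` of `v⁻`. -/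
def EDCsg (G : SimpleGraph V) (σ : V → V → ℤ) (hσ : ∀ u v, σ u v = σ v u) :
    SimpleGraph (V × Bool) where
  Adj x y := (x.1 = y.1 ∧ x.2 ≠ y.2) ∨ (G.Adj x.1 y.1 ∧ (x.2 = y.2 ↔ 0 < σ x.1 y.1))
  symm.symm := fun x y h => by
    rcases h with ⟨h1, h2⟩ | ⟨ha, hb⟩
    · exact Or.inl ⟨h1.symm, h2.symm⟩
    · refine Or.inr ⟨ha.symm, ?_⟩
      rw [hσ y.1 x.1, eq_comm]
      exact hb
  loopless.irrefl := fun x h => by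
    rcases h with ⟨-, h⟩ | ⟨h, -⟩
    · exact h rfl
    · exact G.loopless.irrefl _ h

open Classical in
/-- The signature of the Extended Double Cover: edges `v⁺v⁻` are negative,
all other edges are positive. -/
noncomputable def edcSign : V × Bool → V × Bool → ℤ := fun x y =>
  if x.1 = y.1 then -1 else 1

/-- The underlying graph of the Extended Double Cover of a weighted signed graph. -/
def EDCw (G : SimpleGraph V) : SimpleGraph (V × Bool) where
  Adj x y := (x.1 = y.1 ∧ x.2 ≠ y.2) ∨ G.Adj x.1 y.1
  symm.symm := fun x y h => by
    rcases h with ⟨h1, h2⟩ | h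
    · exact Or.inl ⟨h1.symm, h2.symm⟩
    · exact Or.inr h.symm
  loopless.irrefl := fun x h => by
    rcases h with ⟨-, h⟩ | h
    · exact h rfl
    · exact G.loopless.irrefl _ h

open Classical in
/-- The weights of the Extended Double Cover of a weighted signed graph `(G, ω)`. -/
noncomputable def EDCwWeight (ω : V → V → ℤ) : V × Bool → V × Bool → ℤ := fun x y =>
  if x.1 = y.1 then -1
  else if x.2 = y.2 then (if 0 < ω x.1 y.1 then ω x.1 y.1 else ω x.1 y.1 - 1)
  else (if 0 < ω x.1 y.1 then -(ω x.1 y.1 + 1) else -(ω x.1 y.1))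

/-- `G` has a `K₄`-minor: there are four disjoint nonempty connected branch sets,
pairwise joined by an edge. -/
def HasK4Minor (G : SimpleGraph V) : Prop :=
  ∃ S : Fin 4 → Set V,
    (∀ i, (G.induce (S i)).Connected) ∧
    (∀ i j, i ≠ j → Disjoint (S i) (S j)) ∧
    (∀ i j, i ≠ j → ∃ u ∈ S i, ∃ v ∈ S j, G.Adj u v)

/-- A signed graph `(B, π)` is SP-complete if every connected signed graph whose
underlying graph is finite and `K₄`-minor-free and which satisfies the conclusion of
the no-homomorphism lemma with respect to `(B, π)` admits a homomorphism to `(B, π)`. -/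
def SPComplete (B : SimpleGraph W) (π : W → W → ℤ) : Prop :=
  ∀ (V' : Type) (G : SimpleGraph V') (σ : V' → V' → ℤ),
    Finite V' → (∀ u v, σ u v = σ v u) →
    (∀ u v, G.Adj u v → σ u v = 1 ∨ σ u v = -1) →
    G.Connected → ¬ HasK4Minor G →
    (∀ neg odd : Bool, sGirth B π neg odd ≤ sGirth G σ neg odd) →
    ∃ f : G →g B, IsSignedHom σ π f

/-- The cylinder `C_{2a} □ P_b` on vertex set `{0,…,2a-1} × {0,…,b-1}`. -/
def cylT (a b : ℕ) : SimpleGraph (Fin (2 * a) × Fin b) where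
  Adj x y := (x.1 = y.1 ∧ ((x.2.val : ℤ) - (y.2.val : ℤ)).natAbs = 1) ∨
    (x.2 = y.2 ∧ (((x.1.val : ℤ) - (y.1.val : ℤ)).natAbs = 1 ∨
      ((x.1.val : ℤ) - (y.1.val : ℤ)).natAbs = 2 * a - 1))
  symm.symm := fun x y h => by
    rcases h with ⟨h1, h2⟩ | ⟨h1, h2 | h2⟩
    · exact Or.inl ⟨h1.symm, by omega⟩
    · exact Or.inr ⟨h1.symm, Or.inl (by omega)⟩
    · exact Or.inr ⟨h1.symm, Or.inr (by omega)⟩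
  loopless.irrefl := fun x h => by
    have hpos : 0 < 2 * a := x.1.pos
    rcases h with ⟨-, h⟩ | ⟨-, h | h⟩ <;> omega

/-- Two vertices of the cylinder are antipodal if `|Δi| + |Δj| = a + b - 1`. -/
def antip (a b : ℕ) (x y : Fin (2 * a) × Fin b) : Prop :=
  ((x.1.val : ℤ) - (y.1.val : ℤ)).natAbs + ((x.2.val : ℤ) - (y.2.val : ℤ)).natAbs = a + b - 1

/-- The twisted tube: the cylinder together with the antipodal edges `J`. -/
def twistedTube (a b : ℕ) : SimpleGraph (Fin (2 * a) × Fin b) where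
  Adj x y := (cylT a b).Adj x y ∨ (x ≠ y ∧ antip a b x y)
  symm.symm := fun x y h => by
    rcases h with h | ⟨hne, h⟩
    · exact Or.inl ((cylT a b).symm.symm _ _ h)
    · refine Or.inr ⟨hne.symm, ?_⟩
      unfold antip at h ⊢
      omega
  loopless.irrefl := fun x h => by
    rcases h with h | ⟨hne, -⟩
    · exact (cylT a b).loopless.irrefl x h
    · exact hne rfl

/-- The signature of the twisted tube: antipodal edges (the set `J`) are negative,
all other edges are positive. -/
def ttSign (a b : ℕ) (x y : Fin (2 * a) × Fin b) : ℤ :=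
  if ((x.1.val : ℤ) - (y.1.val : ℤ)).natAbs + ((x.2.val : ℤ) - (y.2.val : ℤ)).natAbs
      = a + b - 1 then -1 else 1

/-- The underlying graph of the signed projective cube `SPC(k)`: vertices are elements
of `ℤ₂^k`, adjacent if they differ in exactly one coordinate or in all coordinates. -/
def spcGraph (k : ℕ) : SimpleGraph (Fin k → ZMod 2) where
  Adj x y := x ≠ y ∧ (hammingDist x y = 1 ∨ hammingDist x y = k)
  symm.symm := fun x y h => ⟨h.1.symm, by rw [hammingDist_comm]; exact h.2⟩
  loopless.irrefl := fun x h => h.1 rfl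

/-- The signature of `SPC(k)`: an edge is negative iff its endpoints differ in
all coordinates. -/
def spcSign (k : ℕ) (x y : Fin k → ZMod 2) : ℤ :=
  if hammingDist x y = k then -1 else 1

lemma spcSign_symm (k : ℕ) : ∀ x y : Fin k → ZMod 2, spcSign k x y = spcSign k y x := by
  intro x y
  unfold spcSign
  rw [hammingDist_comm]

/-- The function `f_g`. -/
def fg (g : ℕ) (x : ℤ) : ℤ := if 0 < x then x else (g : ℤ) + x

/-- `(G, σ)` is (a realization of) the signed graph `T_g(p,q,r)`: three distinguished
vertices `x, y, z` joined by six internally disjoint paths of prescribed lengths and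
signs, whose edges exhaust `G`. -/
def IsTgpqr (G : SimpleGraph V) (σ : V → V → ℤ) (g : ℕ) (p q r : ℤ) : Prop :=
  ∃ (x y z : V) (P1 P2 : G.Walk x y) (Q1 Q2 : G.Walk y z) (R1 R2 : G.Walk z x),
    x ≠ y ∧ y ≠ z ∧ z ≠ x ∧
    P1.IsPath ∧ P2.IsPath ∧ Q1.IsPath ∧ Q2.IsPath ∧ R1.IsPath ∧ R2.IsPath ∧
    P1.length = p.natAbs ∧ P2.length = g - p.natAbs ∧
    Q1.length = q.natAbs ∧ Q2.length = g - q.natAbs ∧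
    R1.length = r.natAbs ∧ R2.length = g - r.natAbs ∧
    walkSign σ P1 = Int.sign p ∧ walkSign σ P2 = -Int.sign p ∧
    walkSign σ Q1 = Int.sign q ∧ walkSign σ Q2 = -Int.sign q ∧
    walkSign σ R1 = Int.sign r ∧ walkSign σ R2 = -Int.sign r ∧
    (∀ e ∈ G.edgeSet, e ∈ P1.edges ∨ e ∈ P2.edges ∨ e ∈ Q1.edges ∨ e ∈ Q2.edges ∨
      e ∈ R1.edges ∨ e ∈ R2.edges) ∧
    (∀ i j : Fin 6, i ≠ j → ∀ v : V,
      v ∈ (![{v | v ∈ P1.support}, {v | v ∈ P2.support}, {v | v ∈ Q1.support},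
            {v | v ∈ Q2.support}, {v | v ∈ R1.support}, {v | v ∈ R2.support}] : Fin 6 → Set V) i →
      v ∈ (![{v | v ∈ P1.support}, {v | v ∈ P2.support}, {v | v ∈ Q1.support},
            {v | v ∈ Q2.support}, {v | v ∈ R1.support}, {v | v ∈ R2.support}] : Fin 6 → Set V) j →
      v = x ∨ v = y ∨ v = z)

/-!
Call a walk a sign geodesic if it is shortest among the walks with its ends and its sign. Projecting
the extended double cover to `G` forgets the negative edges `v⁺v⁻`, so a walk of sign `τ` from
`(u, a)` to `(v, b)` projects to a walk of sign `τ` if `a = b` and `-τ` otherwise. Hence if `d₊` and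
`d₋` are the lengths of the positive and negative sign geodesics from `u` to `v`, the algebraic
distance from `u⁺` to `v⁺` is `d₊` if `d₊ ≤ d₋ + 1` and `-(d₋ + 1)` otherwise, and the one from
`u⁺` to `v⁻` is obtained by exchanging `d₊` and `d₋`. For two vertices on a shortest negative closed
walk of length `g`, the two arcs are sign geodesics, so `d₊ + d₋ = g`.
-/

section Walks

variable {G : SimpleGraph V} {σ : V → V → ℤ} {u v w : V}

lemma walkSign_nil : walkSign σ (Walk.nil : G.Walk u u) = 1 := by
  simp [walkSign]

lemma walkSign_cons (h : G.Adj u v) (p : G.Walk v w) :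
    walkSign σ (Walk.cons h p) = σ u v * walkSign σ p := by
  simp [walkSign]

lemma walkSign_append (p : G.Walk u v) (q : G.Walk v w) :
    walkSign σ (p.append q) = walkSign σ p * walkSign σ q := by
  simp [walkSign]

lemma walkSign_concat (p : G.Walk u v) (h : G.Adj v w) :
    walkSign σ (p.concat h) = walkSign σ p * σ v w := by
  simp [walkSign]

lemma walkSign_reverse (hσ : ∀ u v, σ u v = σ v u) (p : G.Walk u v) :
    walkSign σ p.reverse = walkSign σ p := by
  induction p with
  | nil => rfl
  | cons h p ih =>
    rw [Walk.reverse_cons, ← Walk.concat_eq_append, walkSign_concat, walkSign_cons, ih, hσ,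
      mul_comm]

lemma walkSign_eq_one_or_neg_one (hpm : ∀ u v, G.Adj u v → σ u v = 1 ∨ σ u v = -1)
    (p : G.Walk u v) : walkSign σ p = 1 ∨ walkSign σ p = -1 := by
  induction p with
  | nil => exact Or.inl walkSign_nil
  | cons h p ih =>
    rw [walkSign_cons, ← Int.isUnit_iff]
    exact (Int.isUnit_iff.2 (hpm _ _ h)).mul (Int.isUnit_iff.2 ih)

lemma dist_eq_length_of_forall_le {p : G.Walk u v} (hp : ∀ q : G.Walk u v, p.length ≤ q.length) :
    G.dist u v = p.length := by
  obtain ⟨q, hq⟩ := p.reachable.exists_walk_length_eq_dist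
  exact le_antisymm (dist_le p) (hq ▸ hp q)

lemma adist_eq_length {p : G.Walk u v} (hp : ∀ q : G.Walk u v, p.length ≤ q.length)
    (hpos : 0 < walkSign σ p) : adist G σ u v = p.length := by
  have hd : G.dist u v = p.length := dist_eq_length_of_forall_le hp
  rw [adist, if_pos ⟨p, p.isPath_of_length_eq_dist hd.symm, hd.symm, hpos⟩, hd]

lemma adist_eq_neg_length {p : G.Walk u v} (hp : ∀ q : G.Walk u v, p.length ≤ q.length)
    (hlt : ∀ q : G.Walk u v, 0 < walkSign σ q → p.length < q.length) :
    adist G σ u v = -p.length := by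
  have hd : G.dist u v = p.length := dist_eq_length_of_forall_le hp
  rw [adist, if_neg, hd]
  rintro ⟨q, -, hq, hpos⟩
  exact (hlt q hpos).ne' (hq.trans hd)

lemma exists_walk_length_eq_adist (h : 0 < adist G σ u v) :
    ∃ p : G.Walk u v, 0 < walkSign σ p ∧ p.length = G.dist u v ∧
      (p.length : ℤ) = adist G σ u v := by
  rw [adist] at h ⊢
  split_ifs at h ⊢ with hpath
  · obtain ⟨p, -, hlen, hpos⟩ := hpath
    exact ⟨p, hpos, hlen, by rw [hlen]⟩
  · omega

/-- A walk is a sign geodesic if it is shortest among the walks with the same ends and the same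
sign. The lengths of the sign geodesics of `(G, σ)` determine the distances in its extended double
cover. It need not be a path, as shortcutting a closed subwalk can change the sign. -/
def IsSignGeodesic (σ : V → V → ℤ) (p : G.Walk u v) : Prop :=
  ∀ q : G.Walk u v, walkSign σ q = walkSign σ p → p.length ≤ q.length

lemma isSignGeodesic_of_length_eq_dist {p : G.Walk u v} (hp : p.length = G.dist u v) :
    IsSignGeodesic σ p :=
  fun q _ => hp.trans_le (dist_le q)

lemma exists_arcs_of_mem_support (hσ : ∀ u v, σ u v = σ v u)
    (hpm : ∀ u v, G.Adj u v → σ u v = 1 ∨ σ u v = -1)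
    {c : G.Walk u u} (hc : walkSign σ c = -1) (hv : v ∈ c.support) {s : ℤ} (hs : s = 1 ∨ s = -1) :
    ∃ m n : G.Walk u v, walkSign σ m = s ∧ walkSign σ n = -s ∧
      m.length + n.length = c.length := by
  classical
  set m := c.takeUntil v hv
  set n := (c.dropUntil v hv).reverse
  have sign_mul : walkSign σ m * walkSign σ n = -1 := by
    rw [walkSign_reverse hσ, ← walkSign_append, Walk.take_spec, hc]
  have length_add : m.length + n.length = c.length := by
    rw [Walk.length_reverse, ← Walk.length_append, Walk.take_spec]
  have signs : walkSign σ m = s ∧ walkSign σ n = -s ∨ walkSign σ n = s ∧ walkSign σ m = -s := by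
    rcases walkSign_eq_one_or_neg_one hpm m with h | h <;> rw [h] at sign_mul ⊢ <;> omega
  rcases signs with ⟨hm, hn⟩ | ⟨hn, hm⟩
  · exact ⟨m, n, hm, hn, length_add⟩
  · exact ⟨n, m, hn, hm, (add_comm _ _).trans length_add⟩

lemma exists_isSignGeodesic_of_mem_support (hσ : ∀ u v, σ u v = σ v u)
    (hpm : ∀ u v, G.Adj u v → σ u v = 1 ∨ σ u v = -1)
    {c : G.Walk u u} (hc : walkSign σ c = -1) (hgeo : IsSignGeodesic σ c) (hv : v ∈ c.support)
    {p : G.Walk u v} (hp : IsSignGeodesic σ p) :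
    ∃ n : G.Walk u v, walkSign σ n = -walkSign σ p ∧ IsSignGeodesic σ n ∧
      p.length + n.length = c.length := by
  have opposite_le (q : G.Walk u v) (hq : walkSign σ q = -walkSign σ p) :
      c.length ≤ p.length + q.length := by
    rw [← Walk.length_reverse q, ← Walk.length_append]
    apply hgeo
    rw [walkSign_append, walkSign_reverse hσ, hq, hc]
    rcases walkSign_eq_one_or_neg_one hpm p with h | h <;> rw [h] <;> rfl
  obtain ⟨m, n, hm, hn, hlen⟩ :=
    exists_arcs_of_mem_support hσ hpm hc hv (walkSign_eq_one_or_neg_one hpm p)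
  have hpn : p.length + n.length = c.length :=
    le_antisymm (hlen ▸ Nat.add_le_add_right (hp m hm) _) (opposite_le n hn)
  exact ⟨n, hn, fun q hq => by linarith [opposite_le q (hq.trans hn)], hpn⟩

end Walks

section LayerSign

/-- The sign of an edge of `(G, σ)` that lifts to an edge between the layers `a` and `b` of the
extended double cover. -/
def layerSign (a b : Bool) : ℤ := if a = b then 1 else -1

lemma layerSign_self (a : Bool) : layerSign a a = 1 := if_pos rfl

lemma layerSign_of_ne {a b : Bool} (h : a ≠ b) : layerSign a b = -1 := if_neg h

lemma layerSign_not_right (a b : Bool) : layerSign a (!b) = -layerSign a b := by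
  revert a b; decide

lemma layerSign_eq_one_iff {a b : Bool} : layerSign a b = 1 ↔ a = b := by
  revert a b; decide

lemma layerSign_mul_layerSign (a b c : Bool) : layerSign a b * layerSign b c = layerSign a c := by
  revert a b c; decide

lemma layerSign_mul_self (a b : Bool) : layerSign a b * layerSign a b = 1 := by
  revert a b; decide

lemma exists_layerSign_eq (a : Bool) {s : ℤ} (hs : s = 1 ∨ s = -1) : ∃ b, layerSign a b = s := by
  rcases hs with rfl | rfl
  · exact ⟨a, layerSign_self a⟩
  · exact ⟨!a, by rw [layerSign_not_right, layerSign_self]⟩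

end LayerSign

section ExtendedDoubleCover

variable {G : SimpleGraph V} {σ : V → V → ℤ} (hσ : ∀ u v, σ u v = σ v u) {u v : V} {a b : Bool}

lemma edcSign_of_fst_eq {x y : V × Bool} (h : x.1 = y.1) : edcSign x y = -1 := if_pos h

lemma edcSign_of_fst_ne {x y : V × Bool} (h : x.1 ≠ y.1) : edcSign x y = 1 := if_neg h

lemma edcSign_eq_one_or_neg_one (x y : V × Bool) : edcSign x y = 1 ∨ edcSign x y = -1 :=
  (ne_or_eq x.1 y.1).imp edcSign_of_fst_ne edcSign_of_fst_eq

lemma EDCsg_adj_iff (hpm : ∀ u v, G.Adj u v → σ u v = 1 ∨ σ u v = -1) {x y : V × Bool} :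
    (EDCsg G σ hσ).Adj x y ↔
      (x.1 = y.1 ∧ x.2 ≠ y.2) ∨ (G.Adj x.1 y.1 ∧ σ x.1 y.1 = layerSign x.2 y.2) := by
  refine or_congr_right (and_congr_right fun h => ?_)
  rw [layerSign]
  rcases hpm _ _ h with hs | hs <;> simp [hs]

lemma exists_lift_EDCsg (hpm : ∀ u v, G.Adj u v → σ u v = 1 ∨ σ u v = -1) (p : G.Walk u v)
    (hp : walkSign σ p = layerSign a b) :
    ∃ q : (EDCsg G σ hσ).Walk (u, a) (v, b), walkSign edcSign q = 1 ∧ q.length = p.length := by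
  induction p generalizing a with
  | nil =>
    obtain rfl : a = b := layerSign_eq_one_iff.1 (hp.symm.trans walkSign_nil)
    exact ⟨Walk.nil, walkSign_nil, rfl⟩
  | @cons u w v h p ih =>
    obtain ⟨c, hc⟩ := exists_layerSign_eq a (hpm _ _ h)
    have hcb : walkSign σ p = layerSign c b := by
      rw [walkSign_cons, ← hc, ← layerSign_mul_layerSign a c b] at hp
      exact mul_left_cancel₀ (left_ne_zero_of_mul_eq_one (layerSign_mul_self a c)) hp
    obtain ⟨q, hq, hlen⟩ := ih hcb
    have hadj : (EDCsg G σ hσ).Adj (u, a) (w, c) := (EDCsg_adj_iff hσ hpm).2 (Or.inr ⟨h, hc.symm⟩)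
    refine ⟨Walk.cons hadj q, ?_, congrArg (· + 1) hlen⟩
    rw [walkSign_cons, edcSign_of_fst_ne h.ne, hq, one_mul]

lemma exists_projection_EDCsg (hpm : ∀ u v, G.Adj u v → σ u v = 1 ∨ σ u v = -1)
    {x y : V × Bool} (q : (EDCsg G σ hσ).Walk x y) :
    ∃ p : G.Walk x.1 y.1, walkSign σ p = layerSign x.2 y.2 * walkSign edcSign q ∧
      p.length ≤ q.length ∧ (walkSign edcSign q = -1 → p.length < q.length) := by
  induction q with
  | nil => exact ⟨Walk.nil, by simp [walkSign_nil, layerSign_self], le_rfl, by simp [walkSign_nil]⟩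
  | @cons x z y h q ih =>
    obtain ⟨p, hsign, hle, hlt⟩ := ih
    rw [walkSign_cons, Walk.length_cons, ← layerSign_mul_layerSign x.2 z.2 y.2]
    rcases (EDCsg_adj_iff hσ hpm).1 h with ⟨hfst, hsnd⟩ | ⟨hadj, hσxz⟩
    · have hvert : edcSign x z = -1 := edcSign_of_fst_eq hfst
      obtain ⟨u, a⟩ := x
      obtain ⟨_, b⟩ := z
      obtain rfl : u = _ := hfst
      refine ⟨p, ?_, hle.trans (Nat.le_succ _), fun _ => Nat.lt_succ_of_le hle⟩
      rw [hsign, layerSign_of_ne hsnd, hvert]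
      ring
    · refine ⟨Walk.cons hadj p, ?_, ?_⟩
      · rw [walkSign_cons, edcSign_of_fst_ne hadj.ne, hσxz, hsign, one_mul, mul_assoc]
      · rw [edcSign_of_fst_ne hadj.ne, one_mul, Walk.length_cons]
        omega

lemma IsSignGeodesic.length_le_EDCsg_walk (hpm : ∀ u v, G.Adj u v → σ u v = 1 ∨ σ u v = -1)
    {p n : G.Walk u v} (hp : walkSign σ p = layerSign a b) (hn : walkSign σ n = -layerSign a b)
    (hpgeo : IsSignGeodesic σ p) (hngeo : IsSignGeodesic σ n)
    (q : (EDCsg G σ hσ).Walk (u, a) (v, b)) :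
    (walkSign edcSign q = 1 ∧ p.length ≤ q.length) ∨
      (walkSign edcSign q = -1 ∧ n.length + 1 ≤ q.length) := by
  obtain ⟨r, hr, hle, hlt⟩ := exists_projection_EDCsg hσ hpm q
  rcases walkSign_eq_one_or_neg_one (fun x y _ => edcSign_eq_one_or_neg_one x y) q with hq | hq
  · exact Or.inl ⟨hq, (hpgeo r (by rw [hr, hq, hp, mul_one])).trans hle⟩
  · exact Or.inr ⟨hq, (hngeo r (by rw [hr, hq, hn, mul_neg_one])).trans_lt (hlt hq)⟩

theorem adist_EDCsg_eq_length (hpm : ∀ u v, G.Adj u v → σ u v = 1 ∨ σ u v = -1)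
    {p n : G.Walk u v} (hp : walkSign σ p = layerSign a b) (hn : walkSign σ n = -layerSign a b)
    (hpgeo : IsSignGeodesic σ p) (hngeo : IsSignGeodesic σ n) (hle : p.length ≤ n.length + 1) :
    adist (EDCsg G σ hσ) edcSign (u, a) (v, b) = p.length := by
  obtain ⟨q, hq, hlen⟩ := exists_lift_EDCsg hσ hpm p hp
  rw [← hlen]
  refine adist_eq_length (fun r => ?_) (hq ▸ one_pos)
  rcases hpgeo.length_le_EDCsg_walk hσ hpm hp hn hngeo r with ⟨-, h⟩ | ⟨-, h⟩ <;> omega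

theorem adist_EDCsg_eq_neg_length_add_one (hpm : ∀ u v, G.Adj u v → σ u v = 1 ∨ σ u v = -1)
    {p n : G.Walk u v} (hp : walkSign σ p = layerSign a b) (hn : walkSign σ n = -layerSign a b)
    (hpgeo : IsSignGeodesic σ p) (hngeo : IsSignGeodesic σ n) (hlt : n.length + 1 < p.length) :
    adist (EDCsg G σ hσ) edcSign (u, a) (v, b) = -(n.length + 1) := by
  have hvert : (EDCsg G σ hσ).Adj (v, !b) (v, b) := Or.inl ⟨rfl, Bool.not_ne_self b⟩
  obtain ⟨q, -, hlen⟩ := exists_lift_EDCsg hσ hpm n (hn.trans (layerSign_not_right a b).symm)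
  rw [← hlen, ← Nat.cast_succ, Nat.succ_eq_add_one, ← Walk.length_concat q hvert]
  refine adist_eq_neg_length (fun r => ?_) (fun r hr => ?_) <;> rw [Walk.length_concat, hlen]
  · rcases hpgeo.length_le_EDCsg_walk hσ hpm hp hn hngeo r with ⟨-, h⟩ | ⟨-, h⟩ <;> omega
  · rcases hpgeo.length_le_EDCsg_walk hσ hpm hp hn hngeo r with ⟨-, h⟩ | ⟨hneg, -⟩
    · exact hlt.trans_le h
    · omega

end ExtendedDoubleCover

theorem adist_EDC_pos_general (G : SimpleGraph V) (σ : V → V → ℤ)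
    (hsymm : ∀ u v, σ u v = σ v u) (hpm : ∀ u v, G.Adj u v → σ u v = 1 ∨ σ u v = -1)
    (x y : V) (C : G.Walk x x) (hy : y ∈ C.support) (hneg : walkSign σ C = -1)
    (hgeo : IsSignGeodesic σ C) (hpos : 0 < adist G σ x y) :
    (∀ a, adist (EDCsg G σ hsymm) edcSign (x, a) (y, a) = adist G σ x y) ∧
    (G.dist x y = C.length / 2 →
      (∀ a, adist (EDCsg G σ hsymm) edcSign (x, a) (y, !a) = (C.length : ℤ) - adist G σ x y) ∧
      (C.length : ℤ) - adist G σ x y = (((C.length + 1) / 2 : ℕ) : ℤ)) ∧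
    (G.dist x y ≠ C.length / 2 →
      ∀ a, adist (EDCsg G σ hsymm) edcSign (x, a) (y, !a) = -adist G σ x y - 1) := by
  obtain ⟨P, hPpos, hPdist, hPadist⟩ := exists_walk_length_eq_adist hpos
  have hP : walkSign σ P = 1 := (walkSign_eq_one_or_neg_one hpm P).resolve_right (by omega)
  have hPgeo : IsSignGeodesic σ P := isSignGeodesic_of_length_eq_dist hPdist
  obtain ⟨N, hN, hNgeo, hPN⟩ := exists_isSignGeodesic_of_mem_support hsymm hpm hneg hgeo hy hPgeo
  rw [hP] at hN
  have hPleN : P.length ≤ N.length := hPdist.trans_le (dist_le N)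
  have layerSign_not (a : Bool) : layerSign a (!a) = -1 := by
    rw [layerSign_not_right, layerSign_self]
  rw [← hPdist, ← hPadist]
  refine ⟨fun a => ?_, fun hhalf => ⟨fun a => ?_, by omega⟩, fun hhalf a => ?_⟩
  · exact adist_EDCsg_eq_length hsymm hpm (by rw [hP, layerSign_self])
      (by rw [hN, layerSign_self]) hPgeo hNgeo (by omega)
  · rw [adist_EDCsg_eq_length hsymm hpm (by rw [hN, layerSign_not])
      (by rw [hP, layerSign_not, neg_neg]) hNgeo hPgeo (by omega)]
    omega
  · rw [adist_EDCsg_eq_neg_length_add_one hsymm hpm (by rw [hN, layerSign_not])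
      (by rw [hP, layerSign_not, neg_neg]) hNgeo hPgeo (by omega)]
    omega

/-- algebraic distances in the Extended Double Cover, for vertices
`x, y` on a common negative cycle of length `g` with `ad_{(G,σ)}(x,y) = p > 0`. -/
theorem adist_EDC_pos {V : Type*} [Fintype V]
    (G : SimpleGraph V) (σ : V → V → ℤ)
    (hsymm : ∀ u v, σ u v = σ v u) (hpm : ∀ u v, G.Adj u v → σ u v = 1 ∨ σ u v = -1)
    (g : ℕ) (hg : 0 < g) (hconn : G.Connected) (hwide : gWide G σ g)
    (x y : V) (C : G.Walk x x) (hC : C.IsCycle) (hlen : C.length = g)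
    (hy : y ∈ C.support) (hneg : walkSign σ C = -1)
    (p : ℤ) (hp : adist G σ x y = p) (hppos : 0 < p) :
    adist (EDCsg G σ hsymm) edcSign (x, true) (y, true) = p ∧
    adist (EDCsg G σ hsymm) edcSign (x, false) (y, false) = p ∧
    (G.dist x y = g / 2 →
      adist (EDCsg G σ hsymm) edcSign (x, true) (y, false) = (g : ℤ) - p ∧
      adist (EDCsg G σ hsymm) edcSign (x, false) (y, true) = (g : ℤ) - p ∧
      (g : ℤ) - p = (((g + 1) / 2 : ℕ) : ℤ)) ∧
    (G.dist x y ≠ g / 2 →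
      adist (EDCsg G σ hsymm) edcSign (x, true) (y, false) = -p - 1 ∧
      adist (EDCsg G σ hsymm) edcSign (x, false) (y, true) = -p - 1) := by
  subst hlen hp
  obtain ⟨same, half, short⟩ := adist_EDC_pos_general G σ hsymm hpm x y C hy hneg
    (fun w hw => (hwide.2 x w (by omega)).1) hppos
  exact ⟨same true, same false, fun h => ⟨(half h).1 true, (half h).1 false, (half h).2⟩,
    fun h => ⟨short h true, short h false⟩⟩

end SignedPaper
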